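/- For all disjoint A,B ⊆ U, the 'at least sometimes false' part satisfies sF(A,B) ∪ Un(A,B) ∪ K(A,B) ∪ fK(A,B) ∪ sT(A,B) ∪ T(A,B) = {x ∈ U : [x]_R ∩ (U−B) ≠ ∅} = R̄(U−B), which also equals U − R̲B. -/

import Mathlib

/-!
Rough-set approximations and the seven truth-value parts.
`U − B` is the complement `Bᶜ`, and `U − A − B` is `(A ∪ B)ᶜ`.
-/

namespace PBZ

variable {α : Type*}

/-- Equivalence class `[x]_R`. -/
def cls (r : α → α → Prop) (x : α) : Set α := {y | r x y}

/-- Lower approximation `R̲X = {x : [x]_R ⊆ X}`. -/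
def lower (r : α → α → Prop) (X : Set α) : Set α := {x | cls r x ⊆ X}

/-- Upper approximation `R̄X = {x : [x]_R ∩ X ≠ ∅}`. -/
def upper (r : α → α → Prop) (X : Set α) : Set α := {x | (cls r x ∩ X).Nonempty}

/-- True part `T(A,B) = R̲A`. -/
def Tpart (r : α → α → Prop) (A _B : Set α) : Set α := lower r A

/-- Sometimes true part `sT(A,B) = R̲(U−B) ∩ R̄A ∩ R̄(U−A−B)`. -/
def sTpart (r : α → α → Prop) (A B : Set α) : Set α :=
  lower r Bᶜ ∩ upper r A ∩ upper r (A ∪ B)ᶜ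

/-- Unknown part `Un(A,B) = R̲(U−A−B)`. -/
def Unpart (r : α → α → Prop) (A B : Set α) : Set α := lower r (A ∪ B)ᶜ

/-- Contradictory part `K(A,B) = R̲(A∪B) ∩ R̄A ∩ R̄B`. -/
def Kpart (r : α → α → Prop) (A B : Set α) : Set α :=
  lower r (A ∪ B) ∩ upper r A ∩ upper r B

/-- Fully contradictory part `fK(A,B) = R̄A ∩ R̄B ∩ R̄(U−A−B)`. -/
def fKpart (r : α → α → Prop) (A B : Set α) : Set α :=
  upper r A ∩ upper r B ∩ upper r (A ∪ B)ᶜ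

/-- Sometimes false part `sF(A,B) = R̲(U−A) ∩ R̄B ∩ R̄(U−A−B)`. -/
def sFpart (r : α → α → Prop) (A B : Set α) : Set α :=
  lower r Aᶜ ∩ upper r B ∩ upper r (A ∪ B)ᶜ

/-- False part `F(A,B) = R̲B`. -/
def Fpart (r : α → α → Prop) (_A B : Set α) : Set α := lower r B

end PBZ

open PBZ

/-!
Three pairs of parts merge into simpler regions: `sF ∪ Un = R̲(U−A) ∩ R̄(U−A−B)`,
`K ∪ fK = R̄A ∩ R̄B` and `sT ∪ T = R̲(U−B) ∩ R̄A`. As `R̲(U−B)` is the complement of `R̄B`, the last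
two regions make up `R̄A`; as `R̲(U−A)` is the complement of `R̄A`, the first one adds the rest of
`R̄(U−A−B)`. The union is thus `R̄A ∪ R̄(U−A−B) = R̄(A ∪ (U−A−B)) = R̄(U−B)`.
-/

namespace PBZ

variable {α : Type*} {r : α → α → Prop} {A B : Set α}

theorem compl_lower (r : α → α → Prop) (X : Set α) : (lower r X)ᶜ = upper r Xᶜ :=
  Set.ext fun _ ↦ Set.inter_compl_nonempty_iff.symm

theorem compl_upper (r : α → α → Prop) (X : Set α) : (upper r X)ᶜ = lower r Xᶜ := by
  rw [compl_eq_comm, compl_lower, compl_compl]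

theorem lower_inter (r : α → α → Prop) (X Y : Set α) :
    lower r (X ∩ Y) = lower r X ∩ lower r Y :=
  Set.ext fun _ ↦ Set.subset_inter_iff

theorem upper_union (r : α → α → Prop) (X Y : Set α) :
    upper r (X ∪ Y) = upper r X ∪ upper r Y := by
  rw [← compl_inj_iff, Set.compl_union]
  simp only [compl_upper, Set.compl_union, lower_inter]

theorem lower_subset_upper (hr : Relator.LeftTotal r) (X : Set α) : lower r X ⊆ upper r X :=
  fun x hx ↦ (hr x).imp fun _ hxy ↦ ⟨hxy, hx hxy⟩

theorem sFpart_union_Unpart (hr : Relator.LeftTotal r) (A B : Set α) :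
    sFpart r A B ∪ Unpart r A B = lower r Aᶜ ∩ upper r (A ∪ B)ᶜ := by
  have hUn : Unpart r A B = lower r Aᶜ ∩ (upper r B)ᶜ ∩ upper r (A ∪ B)ᶜ :=
    calc
      Unpart r A B = lower r (A ∪ B)ᶜ ∩ upper r (A ∪ B)ᶜ :=
        (Set.inter_eq_left.mpr (lower_subset_upper hr _)).symm
      _ = lower r Aᶜ ∩ (upper r B)ᶜ ∩ upper r (A ∪ B)ᶜ := by
        rw [compl_upper, ← lower_inter, ← Set.compl_union]
  rw [hUn, sFpart, ← Set.union_inter_distrib_right, Set.inter_union_compl]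

theorem Kpart_union_fKpart (r : α → α → Prop) (A B : Set α) :
    Kpart r A B ∪ fKpart r A B = upper r A ∩ upper r B := by
  have hK : Kpart r A B = upper r A ∩ upper r B ∩ (upper r (A ∪ B)ᶜ)ᶜ := by
    rw [Kpart, compl_upper, compl_compl, Set.inter_assoc, Set.inter_comm]
  rw [hK, fKpart, Set.union_comm, Set.inter_union_compl]

theorem sTpart_union_Tpart (hr : Relator.LeftTotal r) (hAB : Disjoint A B) :
    sTpart r A B ∪ Tpart r A B = lower r Bᶜ ∩ upper r A := by
  have hA : A = Bᶜ ∩ (A ∪ B) := by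
    rw [Set.inter_union_distrib_left, Set.compl_inter_self, Set.union_empty,
      Set.inter_eq_right.mpr hAB.subset_compl_right]
  have hT : Tpart r A B = lower r Bᶜ ∩ upper r A ∩ (upper r (A ∪ B)ᶜ)ᶜ :=
    calc
      Tpart r A B = lower r A ∩ upper r A :=
        (Set.inter_eq_left.mpr (lower_subset_upper hr A)).symm
      _ = lower r Bᶜ ∩ lower r (A ∪ B) ∩ upper r A := by rw [← lower_inter, ← hA]
      _ = lower r Bᶜ ∩ upper r A ∩ (upper r (A ∪ B)ᶜ)ᶜ := by
        rw [compl_upper, compl_compl, Set.inter_right_comm]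
  rw [hT, sTpart, Set.inter_union_compl]

theorem upper_union_upper_compl_union (r : α → α → Prop) (hAB : Disjoint A B) :
    upper r A ∪ upper r (A ∪ B)ᶜ = upper r Bᶜ := by
  rw [← upper_union, Set.compl_union, Set.union_inter_distrib_left, Set.union_compl_self,
    Set.univ_inter, Set.union_eq_right.mpr hAB.subset_compl_right]

end PBZ

theorem stmt_18_general {α : Type*} {r : α → α → Prop} (hr : Relator.LeftTotal r)
    {A B : Set α} (hAB : Disjoint A B) :
    sFpart r A B ∪ Unpart r A B ∪ Kpart r A B ∪ fKpart r A B ∪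
        sTpart r A B ∪ Tpart r A B = {x | (cls r x ∩ Bᶜ).Nonempty} ∧
    sFpart r A B ∪ Unpart r A B ∪ Kpart r A B ∪ fKpart r A B ∪
        sTpart r A B ∪ Tpart r A B = upper r Bᶜ ∧
    upper r Bᶜ = (lower r B)ᶜ := by
  have parts_eq_upper : sFpart r A B ∪ Unpart r A B ∪ Kpart r A B ∪ fKpart r A B ∪
      sTpart r A B ∪ Tpart r A B = upper r Bᶜ :=
    calc
      _ = (sFpart r A B ∪ Unpart r A B) ∪
            ((Kpart r A B ∪ fKpart r A B) ∪ (sTpart r A B ∪ Tpart r A B)) := by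
        simp only [Set.union_assoc]
      _ = (upper r A)ᶜ ∩ upper r (A ∪ B)ᶜ ∪
            (upper r A ∩ upper r B ∪ upper r A ∩ (upper r B)ᶜ) := by
        rw [sFpart_union_Unpart hr, Kpart_union_fKpart, sTpart_union_Tpart hr hAB,
          ← compl_upper, ← compl_upper, Set.inter_comm (upper r B)ᶜ]
      _ = upper r A ∪ upper r (A ∪ B)ᶜ := by
        rw [Set.inter_union_compl, Set.union_comm, Set.union_inter_distrib_left,
          Set.union_compl_self, Set.univ_inter]
      _ = upper r Bᶜ := upper_union_upper_compl_union r hAB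
  exact ⟨parts_eq_upper, parts_eq_upper, (compl_lower r B).symm⟩

/-- `sF(A,B) ∪ Un(A,B) ∪ K(A,B) ∪ fK(A,B) ∪ sT(A,B) ∪ T(A,B)
= {x : [x]_R ∩ (U−B) ≠ ∅} = R̄(U−B) = U − R̲B`. -/
theorem stmt_18 {α : Type*} (r : α → α → Prop) (hr : Equivalence r)
    (A B : Set α) (hAB : A ∩ B = ∅) :
    sFpart r A B ∪ Unpart r A B ∪ Kpart r A B ∪ fKpart r A B ∪
        sTpart r A B ∪ Tpart r A B = {x | (cls r x ∩ Bᶜ).Nonempty} ∧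
    sFpart r A B ∪ Unpart r A B ∪ Kpart r A B ∪ fKpart r A B ∪
        sTpart r A B ∪ Tpart r A B = upper r Bᶜ ∧
    upper r Bᶜ = (lower r B)ᶜ :=
  stmt_18_general (Relator.LeftTotal.refl hr.refl) (Set.disjoint_iff_inter_eq_empty.mpr hAB)
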